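/- arXiv:1608.02223 — 2 statements merged into one kernel-verified Lean document; each statement's English description precedes it below -/
import Mathlib

section
/- Let k be an algebraically closed field and let Z = {((z_0 : z_0' : z_2 : z_2'), (y : y')) ∈ P^3 × P^1 : z_0 z_0' + z_2 z_2' = 0 and z_2 y' + z_2' y = 0}. Then Z is a smooth irreducible projective variety of dimension 2. -/
open MvPolynomial

namespace Stmt6

variable {k : Type} [Field k]

/-- First equation. -/
noncomputable def q1 (k : Type) [Field k] : MvPolynomial (Fin 6) k := X 0 * X 1 + X 2 * X 3
/-- Second equation. -/
noncomputable def q2 (k : Type) [Field k] : MvPolynomial (Fin 6) k := X 2 * X 5 + X 3 * X 4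
/-- The ideal. -/
noncomputable def J (k : Type) [Field k] : Ideal (MvPolynomial (Fin 6) k) :=
  Ideal.span {q1 k, q2 k}

lemma q1_mem : q1 k ∈ J k := Ideal.subset_span (by simp)
lemma q2_mem : q2 k ∈ J k := Ideal.subset_span (by simp)

/-- Standard exponents. -/
def Nm (m : Fin 6 →₀ ℕ) : Prop := (m 0 = 0 ∨ m 1 = 0) ∧ (m 2 = 0 ∨ m 5 = 0)

lemma decomp (m : Fin 6 →₀ ℕ) (i j : Fin 6) (hij : i ≠ j) (hi : m i ≠ 0) (hj : m j ≠ 0) :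
    ∃ m' : Fin 6 →₀ ℕ, m = m' + Finsupp.single i 1 + Finsupp.single j 1 := by
  refine ⟨m - Finsupp.single i 1 - Finsupp.single j 1, ?_⟩
  ext a
  by_cases h1 : a = i
  · subst h1
    simp [hij, hij.symm]
    omega
  · by_cases h2 : a = j
    · subst h2
      simp [hij, hij.symm]
      omega
    · simp [Ne.symm h1, Ne.symm h2, h1, h2]

lemma mon_two (m' : Fin 6 →₀ ℕ) (i j : Fin 6) (c : k) :
    monomial (m' + Finsupp.single i 1 + Finsupp.single j 1) c
      = monomial m' c * X i * X j := by
  simp [X, monomial_mul]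

lemma span_mon (n : ℕ) : ∀ (m : Fin 6 →₀ ℕ), 2 * m 0 + m 2 = n → ∀ c : k,
    ∃ g : MvPolynomial (Fin 6) k, monomial m c - g ∈ J k ∧ ∀ a ∈ g.support, Nm a := by
  induction n using Nat.strong_induction_on with
  | _ n ih =>
  intro m hm c
  by_cases h1 : m 0 = 0 ∨ m 1 = 0
  · by_cases h2 : m 2 = 0 ∨ m 5 = 0
    · refine ⟨monomial m c, by simp, ?_⟩
      intro a ha
      have := Finset.mem_singleton.1 (support_monomial_subset ha)
      subst this
      exact ⟨h1, h2⟩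
    · push Not at h2
      obtain ⟨m', rfl⟩ := decomp m 2 5 (by decide) h2.1 h2.2
      obtain ⟨g, hg, hN⟩ := ih (n - 1) (by simp at hm; omega)
        (m' + Finsupp.single 3 1 + Finsupp.single 4 1) (by simp at hm ⊢; omega) (-c)
      refine ⟨g, ?_, hN⟩
      have e : monomial (m' + Finsupp.single 2 1 + Finsupp.single 5 1) c - g
          = monomial m' c * q2 k
            + (monomial (m' + Finsupp.single 3 1 + Finsupp.single 4 1) (-c) - g) := by
        rw [mon_two, mon_two, q2, map_neg]
        ring
      rw [e]
      exact add_mem (Ideal.mul_mem_left _ _ q2_mem) hg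
  · push Not at h1
    obtain ⟨m', rfl⟩ := decomp m 0 1 (by decide) h1.1 h1.2
    obtain ⟨g, hg, hN⟩ := ih (n - 1) (by simp at hm; omega)
      (m' + Finsupp.single 2 1 + Finsupp.single 3 1) (by simp at hm ⊢; omega) (-c)
    refine ⟨g, ?_, hN⟩
    have e : monomial (m' + Finsupp.single 0 1 + Finsupp.single 1 1) c - g
        = monomial m' c * q1 k
          + (monomial (m' + Finsupp.single 2 1 + Finsupp.single 3 1) (-c) - g) := by
      rw [mon_two, mon_two, q1, map_neg]
      ring
    rw [e]
    exact add_mem (Ideal.mul_mem_left _ _ q1_mem) hg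

lemma span_all (f : MvPolynomial (Fin 6) k) :
    ∃ g : MvPolynomial (Fin 6) k, f - g ∈ J k ∧ ∀ a ∈ g.support, Nm a := by
  induction f using MvPolynomial.induction_on' with
  | monomial m c => exact span_mon _ m rfl c
  | add p q hp hq =>
    obtain ⟨g, hg, hN⟩ := hp
    obtain ⟨g', hg', hN'⟩ := hq
    refine ⟨g + g', ?_, ?_⟩
    · have := add_mem hg hg'
      convert this using 1
      ring
    · intro a ha
      rcases Finset.mem_union.1 (support_add ha) with h | h
      · exact hN a h
      · exact hN' a h

/-- Parametrization of the cone. -/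
noncomputable def φ (k : Type) [Field k] : MvPolynomial (Fin 6) k →ₐ[k] MvPolynomial (Fin 4) k :=
  aeval ![X 0 ^ 2 * X 2, X 1 ^ 2 * X 3, X 0 * X 1 * X 2, -(X 0 * X 1 * X 3), X 2, X 3]

/-- Exponent map. -/
noncomputable def E (m : Fin 6 →₀ ℕ) : Fin 4 →₀ ℕ :=
  Finsupp.equivFunOnFinite.symm
    ![2 * m 0 + m 2 + m 3, 2 * m 1 + m 2 + m 3, m 0 + m 2 + m 4, m 1 + m 3 + m 5]

lemma E_inj {m m' : Fin 6 →₀ ℕ} (h : Nm m) (h' : Nm m') (e : E m = E m') : m = m' := by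
  have e0 := DFunLike.congr_fun e 0
  have e1 := DFunLike.congr_fun e 1
  have e2 := DFunLike.congr_fun e 2
  have e3 := DFunLike.congr_fun e 3
  simp [E] at e0 e1 e2 e3
  obtain ⟨h1, h2⟩ := h
  obtain ⟨h3, h4⟩ := h'
  ext a
  fin_cases a <;> simp <;> omega

lemma φ_mon (m : Fin 6 →₀ ℕ) (c : k) :
    φ k (monomial m c) = monomial (E m) (c * (-1) ^ (m 3)) := by
  rw [φ, aeval_monomial, monomial_eq, Finsupp.prod_fintype _ _ (by simp),
    Finsupp.prod_fintype _ _ (by simp), Fin.prod_univ_six, Fin.prod_univ_four]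
  simp [E, MvPolynomial.algebraMap_eq]
  rw [neg_pow (X 0 * X 1 * X 3 : MvPolynomial (Fin 4) k)]
  ring

lemma φ_inj (g : MvPolynomial (Fin 6) k) (hN : ∀ a ∈ g.support, Nm a) (h : φ k g = 0) :
    g = 0 := by
  by_contra hg
  obtain ⟨m, hm⟩ := support_nonempty.2 hg
  have h2 : coeff (E m) (φ k g) = 0 := by rw [h]; simp
  rw [g.as_sum, map_sum, coeff_sum, Finset.sum_eq_single m] at h2
  · rw [φ_mon, coeff_monomial, if_pos rfl] at h2
    have := mem_support_iff.1 hm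
    simp [this] at h2
  · intro b hb hbm
    rw [φ_mon, coeff_monomial, if_neg]
    intro he
    exact hbm (E_inj (hN b hb) (hN m hm) he)
  · intro h; exact absurd hm h

lemma J_eq : J k = RingHom.ker (φ k) := by
  have hle : J k ≤ RingHom.ker (φ k) := by
    rw [J, Ideal.span_le]
    intro x hx
    rcases hx with rfl | rfl
    · simp [RingHom.mem_ker, q1, φ]; ring
    · simp [RingHom.mem_ker, q2, φ]; ring
  refine le_antisymm hle ?_
  intro f hf
  obtain ⟨g, hg, hN⟩ := span_all f
  have h1 := hle hg
  rw [RingHom.mem_ker] at hf h1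
  rw [map_sub, hf, zero_sub, neg_eq_zero] at h1
  have := φ_inj g hN h1
  simpa [this] using hg

lemma J_prime : (J k).IsPrime := by
  rw [J_eq]; exact RingHom.ker_isPrime _

/-- Specialization onto a three-dimensional linear subspace. -/
noncomputable def σ3 (k : Type) [Field k] : MvPolynomial (Fin 6) k →ₐ[k] MvPolynomial (Fin 3) k :=
  aeval ![0, X 0, 0, 0, X 1, X 2]

lemma σ3_surj : Function.Surjective (σ3 k) := by
  intro f
  refine ⟨aeval ![X 1, X 4, X 5] f, ?_⟩
  have : (σ3 k).comp (aeval ![X 1, X 4, X 5]) = AlgHom.id k _ := by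
    ext i
    fin_cases i <;> simp [σ3]
  exact DFunLike.congr_fun this f

lemma dim_ge : 4 ≤ ringKrullDim (MvPolynomial (Fin 6) k ⧸ J k) := by
  have := J_prime (k := k)
  have hz : ∀ a ∈ J k, (σ3 k : MvPolynomial (Fin 6) k →+* MvPolynomial (Fin 3) k) a = 0 := by
    have hle : J k ≤ RingHom.ker (σ3 k) := by
      rw [J, Ideal.span_le]
      intro x hx
      rcases hx with rfl | rfl
      · simp [RingHom.mem_ker, q1, σ3]
      · simp [RingHom.mem_ker, q2, σ3]
    exact fun a ha => hle ha
  have h := ringKrullDim_succ_le_of_surjective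
    (Ideal.Quotient.lift (J k) _ hz)
    (Ideal.Quotient.lift_surjective_of_surjective _ _ σ3_surj)
    (r := Ideal.Quotient.mk (J k) (X 0)) (by
      rw [mem_nonZeroDivisors_iff_ne_zero, Ne, Ideal.Quotient.eq_zero_iff_mem, J_eq,
        RingHom.mem_ker]
      simp [φ]) (by simp [σ3])
  rw [MvPolynomial.ringKrullDim_of_isNoetherianRing, ringKrullDim_eq_zero_of_field] at h
  refine le_trans ?_ h
  simp
  norm_num

/-- Noether normalization. -/
noncomputable def ν (k : Type) [Field k] :
    MvPolynomial (Fin 4) k →ₐ[k] (MvPolynomial (Fin 6) k ⧸ J k) :=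
  (Ideal.Quotient.mkₐ k (J k)).comp (aeval ![X 0 + X 1, X 2 + X 5, X 3 + X 4, X 2])

lemma ν_int : (ν k).toRingHom.IsIntegral := by
  algebraize [(ν k).toRingHom]
  set π := Ideal.Quotient.mkₐ k (J k) with hπ
  have hal : ∀ x, algebraMap (MvPolynomial (Fin 4) k) (MvPolynomial (Fin 6) k ⧸ J k) x = ν k x :=
    fun _ => rfl
  have r1 : π (X 0) * π (X 1) + π (X 2) * π (X 3) = 0 := by
    rw [← map_mul, ← map_mul, ← map_add]
    exact Ideal.Quotient.eq_zero_iff_mem.2 q1_mem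
  have r2 : π (X 2) * π (X 5) + π (X 3) * π (X 4) = 0 := by
    rw [← map_mul, ← map_mul, ← map_add]
    exact Ideal.Quotient.eq_zero_iff_mem.2 q2_mem
  have v0 : ν k (X 0) = π (X 0) + π (X 1) := by simp [ν, hπ]
  have v1 : ν k (X 1) = π (X 2) + π (X 5) := by simp [ν, hπ]
  have v2 : ν k (X 2) = π (X 3) + π (X 4) := by simp [ν, hπ]
  have v3 : ν k (X 3) = π (X 2) := by simp [ν, hπ]
  have ia : ∀ x, IsIntegral (MvPolynomial (Fin 4) k) (ν k x) := fun x => by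
    rw [← hal]; exact isIntegral_algebraMap
  have i2 : IsIntegral (MvPolynomial (Fin 4) k) (π (X 2)) := v3 ▸ ia _
  have i3 : IsIntegral (MvPolynomial (Fin 4) k) (π (X 3)) := by
    refine ⟨Polynomial.X ^ 2 - Polynomial.C (X 2) * Polynomial.X
      + Polynomial.C (X 3 ^ 2 - X 3 * X 1), by monicity!, ?_⟩
    simp [hal, v1, v2, v3]
    linear_combination -r2
  have i4 : IsIntegral (MvPolynomial (Fin 4) k) (π (X 4)) := by
    have := (ia (X 2)).sub i3
    rwa [v2, add_sub_cancel_left] at this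
  have i5 : IsIntegral (MvPolynomial (Fin 4) k) (π (X 5)) := by
    have := (ia (X 1)).sub i2
    rwa [v1, add_sub_cancel_left] at this
  have i0 : IsIntegral (MvPolynomial (Fin 4) k) (π (X 0)) := by
    refine ⟨(Polynomial.X ^ 2 - Polynomial.C (X 0) * Polynomial.X) ^ 2
      - Polynomial.C (X 2 * X 3) * (Polynomial.X ^ 2 - Polynomial.C (X 0) * Polynomial.X)
      + Polynomial.C (X 3 ^ 2 * (X 3 ^ 2 - X 3 * X 1)), by monicity!, ?_⟩
    have hs : π (X 0) ^ 2 - (π (X 0) + π (X 1)) * π (X 0) = π (X 2) * π (X 3) := by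
      linear_combination -r1
    simp [hal, v0, v1, v2, v3, hs]
    linear_combination -(π (X 2)) ^ 2 * r2
  have i1 : IsIntegral (MvPolynomial (Fin 4) k) (π (X 1)) := by
    have := (ia (X 0)).sub i0
    rwa [v0, add_sub_cancel_left] at this
  intro y
  change IsIntegral (MvPolynomial (Fin 4) k) y
  obtain ⟨f, rfl⟩ := Ideal.Quotient.mk_surjective y
  change IsIntegral (MvPolynomial (Fin 4) k) (π f)
  induction f using MvPolynomial.induction_on with
  | C a =>
    have : π (C a) = ν k (C a) := by
      rw [← MvPolynomial.algebraMap_eq, ← MvPolynomial.algebraMap_eq, AlgHom.commutes,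
        AlgHom.commutes]
    rw [this]; exact ia _
  | add p q hp hq => rw [map_add]; exact hp.add hq
  | mul_X p i hp =>
    rw [map_mul]
    refine hp.mul ?_
    fin_cases i
    exacts [i0, i1, i2, i3, i4, i5]

lemma dim_le : ringKrullDim (MvPolynomial (Fin 6) k ⧸ J k) ≤ 4 := by
  have hi := ν_int (k := k)
  algebraize [(ν k).toRingHom]
  have h : ringKrullDim (MvPolynomial (Fin 6) k ⧸ J k) ≤ ringKrullDim (MvPolynomial (Fin 4) k) := by
    refine Order.krullDim_le_of_strictMono
      (PrimeSpectrum.comap (algebraMap (MvPolynomial (Fin 4) k) (MvPolynomial (Fin 6) k ⧸ J k))) ?_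
    intro a b hab
    have h2 : a.asIdeal < b.asIdeal := hab
    exact Ideal.IsIntegral.comap_lt_comap (R := MvPolynomial (Fin 4) k) h2
  refine h.trans ?_
  rw [MvPolynomial.ringKrullDim_of_isNoetherianRing, ringKrullDim_eq_zero_of_field]
  simp

lemma jac (v : Fin 6 → k) (h1 : v 0 * v 1 + v 2 * v 3 = 0)
    (hz : ¬(v 0 = 0 ∧ v 1 = 0 ∧ v 2 = 0 ∧ v 3 = 0)) (hy : ¬(v 4 = 0 ∧ v 5 = 0)) :
    (Matrix.of fun (i : Fin 2) (j : Fin 6) =>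
        eval v (pderiv j (![q1 k, q2 k] i))).rank = 2 := by
  have hM : (Matrix.of fun (i : Fin 2) (j : Fin 6) =>
        eval v (pderiv j (![q1 k, q2 k] i)))
      = Matrix.of ![![v 1, v 0, v 3, v 2, 0, 0], ![0, 0, v 5, v 4, v 3, v 2]] := by
    ext i j
    fin_cases i <;> fin_cases j <;> simp [q1, q2, pderiv_X, Pi.single_apply]
  rw [hM]
  have hli : LinearIndependent k
      (Matrix.of ![![v 1, v 0, v 3, v 2, 0, 0], ![0, 0, v 5, v 4, v 3, v 2]]).row := by
    change LinearIndependent k ![![v 1, v 0, v 3, v 2, 0, 0], ![0, 0, v 5, v 4, v 3, v 2]]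
    rw [LinearIndependent.pair_iff]
    intro s t hst
    have c0 := congrFun hst 0
    have c1 := congrFun hst 1
    have c2 := congrFun hst 2
    have c3 := congrFun hst 3
    have c4 := congrFun hst 4
    have c5 := congrFun hst 5
    simp at c0 c1 c2 c3 c4 c5
    grind
  simpa using hli.rank_matrix

end Stmt6



/-- The biprojective variety `Z ⊆ P³ × P¹` cut out by `z₀z₀' + z₂z₂' = 0` and
`z₂y' + z₂'y = 0` is a smooth irreducible projective variety of dimension 2.
This is encoded via the affine cone in `𝔸⁴ × 𝔸²` (variables `0,1,2,3 = z₀,z₀',z₂,z₂'`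
and `4,5 = y,y'`): the defining ideal is prime (irreducibility), the cone has Krull
dimension `4 = 2 + 1 + 1` (so `Z` has dimension 2), and at every point of the cone with
both components nonzero the Jacobian matrix has rank 2 (smoothness, by the Jacobian
criterion); projectivity holds by construction. -/
theorem stmt6 {k : Type} [Field k] [IsAlgClosed k] :
    let p₁ : MvPolynomial (Fin 6) k := X 0 * X 1 + X 2 * X 3
    let p₂ : MvPolynomial (Fin 6) k := X 2 * X 5 + X 3 * X 4
    let I : Ideal (MvPolynomial (Fin 6) k) := Ideal.span {p₁, p₂}
    I.IsPrime ∧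
    ringKrullDim (MvPolynomial (Fin 6) k ⧸ I) = 4 ∧
    ∀ v : Fin 6 → k, eval v p₁ = 0 → eval v p₂ = 0 →
      ¬(v 0 = 0 ∧ v 1 = 0 ∧ v 2 = 0 ∧ v 3 = 0) → ¬(v 4 = 0 ∧ v 5 = 0) →
      (Matrix.of fun (i : Fin 2) (j : Fin 6) =>
        eval v (pderiv j (![p₁, p₂] i))).rank = 2 := by
  intro p₁ p₂ I
  exact ⟨Stmt6.J_prime, le_antisymm Stmt6.dim_le Stmt6.dim_ge, fun v h1 _ hz hy =>
    Stmt6.jac v (by simpa [p₁] using h1) hz hy⟩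
end

section
/- Let M be the 6×6 matrix over ℚ(q) with rows and columns indexed by H = (0,1,3,4,9,12) whose (h,h') entry is q^{-h-h'} Γ_{E_h ⊗ E_{h'}}, where E_0=1, E_1=ε, E_3=ρ, E_4=ρ', E_9=ε', E_12=s are the irreducible representations of the dihedral group W of order 12 and Γ_E = (1/12) Σ_{w∈W} (q^2-1)(q^6-1) tr(w,E)/det(q - w) (determinant in the reflection representation). Then M admits a factorization M = Πᵗ A Π where A is the diagonal matrix with entries q^{-2}(q^2-1)(q^6-1), q^{-4}(q^2-1)(q^6-1), q^{-8}(q^2-1)(q^6-1), q^{-8}(q^6-1), q^{-18}(q^6-1), q^{-18}, and Πᵗ is the upper triangular matrix with rows (1,0,q^2,q^2,q^6,q^6), (0,1,0,q^2,0,q^8), (0,0,1,1,q^4,q^4+q^8), (0,0,0,1,q^4,q^4+q^6), (0,0,0,0,1,1), (0,0,0,0,0,1). -/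
theorem sum_dihedral_six {K : Type*} [AddCommMonoid K] (f : DihedralGroup 6 → K) :
    ∑ w, f w =
      (f (.r 0) + f (.r 1) + f (.r 2) + f (.r 3) + f (.r 4) + f (.r 5))
      + (f (.sr 0) + f (.sr 1) + f (.sr 2) + f (.sr 3) + f (.sr 4) + f (.sr 5)) := by
  let e : (Fin 6 ⊕ Fin 6) ≃ DihedralGroup 6 :=
    { toFun := fun x => Sum.elim (fun j => DihedralGroup.r (j : ZMod 6))
        (fun j => DihedralGroup.sr (j : ZMod 6)) x
      invFun := fun w => match w with
        | DihedralGroup.r j => Sum.inl j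
        | DihedralGroup.sr j => Sum.inr j
      left_inv := by rintro (j | j) <;> rfl
      right_inv := by rintro (j | j) <;> rfl }
  rw [← Equiv.sum_comp e, Fintype.sum_sum_type, Fin.sum_univ_six, Fin.sum_univ_six]
  rfl

theorem denominators_ne {K : Type*} [Field K] (φ : Polynomial ℂ →+* K)
    (hφ : Function.Injective φ) :
    φ Polynomial.X - 1 ≠ 0 ∧ φ Polynomial.X + 1 ≠ 0 ∧
      φ Polynomial.X ^ 2 - φ Polynomial.X + 1 ≠ 0 ∧
      φ Polynomial.X ^ 2 + φ Polynomial.X + 1 ≠ 0 := by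
  have key : ∀ p : Polynomial ℂ, p.eval 0 ≠ 0 → φ p ≠ 0 := by
    intro p hp h0
    have : p = 0 := hφ (by rw [h0, map_zero])
    simp [this] at hp
  have k1 := key (Polynomial.X - 1) (by simp)
  have k2 := key (Polynomial.X + 1) (by simp)
  have k3 := key (Polynomial.X ^ 2 - Polynomial.X + 1) (by simp)
  have k4 := key (Polynomial.X ^ 2 + Polynomial.X + 1) (by simp)
  simp only [map_add, map_sub, map_pow, map_one] at k1 k2 k3 k4
  exact ⟨k1, k2, k3, k4⟩

theorem gamma_field {K : Type*} [Field K] (q : K) (h1 : q - 1 ≠ 0) (h2 : q + 1 ≠ 0)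
    (h3 : q ^ 2 - q + 1 ≠ 0) (h4 : q ^ 2 + q + 1 ≠ 0) (c a0 a1 a2 a3 a4 a5 b0 b1 b2 b3 b4 b5 : K) :
    c * (((q^2-1)*(q^6-1)*a0/(q^2-2*q+1) + (q^2-1)*(q^6-1)*a1/(q^2-1*q+1)
      + (q^2-1)*(q^6-1)*a2/(q^2-(-1)*q+1) + (q^2-1)*(q^6-1)*a3/(q^2-(-2)*q+1)
      + (q^2-1)*(q^6-1)*a4/(q^2-(-1)*q+1) + (q^2-1)*(q^6-1)*a5/(q^2-1*q+1))
      + ((q^2-1)*(q^6-1)*b0/(q^2-0*q+(-1)) + (q^2-1)*(q^6-1)*b1/(q^2-0*q+(-1))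
      + (q^2-1)*(q^6-1)*b2/(q^2-0*q+(-1)) + (q^2-1)*(q^6-1)*b3/(q^2-0*q+(-1))
      + (q^2-1)*(q^6-1)*b4/(q^2-0*q+(-1)) + (q^2-1)*(q^6-1)*b5/(q^2-0*q+(-1))))
    = c * ((q+1)^2*(q^2-q+1)*(q^2+q+1)*a0 + (q^2-1)^2*(q^2+q+1)*(a1+a5)
      + (q^2-1)^2*(q^2-q+1)*(a2+a4) + (q-1)^2*(q^2-q+1)*(q^2+q+1)*a3
      + (q^6-1)*(b0+b1+b2+b3+b4+b5)) := by
  have e0 : q^2-2*q+1 = (q-1)^2 := by ring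
  have e1 : q^2-1*q+1 = q^2-q+1 := by ring
  have e2 : q^2-(-1)*q+1 = q^2+q+1 := by ring
  have e3 : q^2-(-2)*q+1 = (q+1)^2 := by ring
  have e4 : q^2-0*q+(-1) = (q-1)*(q+1) := by ring
  have e6 : q^6-1 = (q-1)*(q+1)*(q^2-q+1)*(q^2+q+1) := by ring
  have e5 : q^2-1 = (q-1)*(q+1) := by ring
  rw [e0, e1, e2, e3, e4, e6, e5]
  generalize q^2-q+1 = s at *
  generalize q^2+q+1 = t at *
  generalize q-1 = u at *
  generalize q+1 = v at *
  field_simp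
  ring



set_option maxHeartbeats 4000000 in
theorem main_field {K : Type*} [Field K] [CharZero K] (C : ℂ →+* K) (X : K)
    (d0 : X ≠ 0) (d1 : X - 1 ≠ 0) (d2 : X + 1 ≠ 0) (d3 : X ^ 2 - X + 1 ≠ 0) (d4 : X ^ 2 + X + 1 ≠ 0)
    (ζ : ℂ) (hζ : IsPrimitiveRoot ζ 6)
    (χ1 χs χε χε' χρ χρ' : DihedralGroup 6 → ℂ)
    (hχ1 : ∀ g, χ1 g = 1)
    (hχs_r : ∀ j : ZMod 6, χs (DihedralGroup.r j) = 1)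
    (hχs_sr : ∀ j : ZMod 6, χs (DihedralGroup.sr j) = -1)
    (hχε_r : ∀ j : ZMod 6, χε (DihedralGroup.r j) = (-1) ^ j.val)
    (hχε_sr : ∀ j : ZMod 6, χε (DihedralGroup.sr j) = (-1) ^ (j.val + 1))
    (hχε'_r : ∀ j : ZMod 6, χε' (DihedralGroup.r j) = (-1) ^ j.val)
    (hχε'_sr : ∀ j : ZMod 6, χε' (DihedralGroup.sr j) = (-1) ^ j.val)
    (hχρ_r : ∀ j : ZMod 6, χρ (DihedralGroup.r j) = ζ ^ j.val + ζ⁻¹ ^ j.val)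
    (hχρ_sr : ∀ j : ZMod 6, χρ (DihedralGroup.sr j) = 0)
    (hχρ'_r : ∀ j : ZMod 6, χρ' (DihedralGroup.r j) = (ζ ^ 2) ^ j.val + (ζ⁻¹ ^ 2) ^ j.val)
    (hχρ'_sr : ∀ j : ZMod 6, χρ' (DihedralGroup.sr j) = 0)
    (Γ : (DihedralGroup 6 → ℂ) → K)
    (hΓ : ∀ χE : DihedralGroup 6 → ℂ,
      Γ χE = C (1 / 12 : ℂ) * ∑ w : DihedralGroup 6,
        (X ^ 2 - 1) * (X ^ 6 - 1) * C (χE w) /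
          (X ^ 2 - C (χρ w) * X + C (χs w))) :
    let q : K := X
    let h : Fin 6 → ℤ := ![0, 1, 3, 4, 9, 12]
    let E : Fin 6 → (DihedralGroup 6 → ℂ) := ![χ1, χε, χρ, χρ', χε', χs]
    let M : Matrix (Fin 6) (Fin 6) (K) :=
      Matrix.of fun i j => q ^ (-(h i + h j)) * Γ (fun w => E i w * E j w)
    let A : Matrix (Fin 6) (Fin 6) (K) :=
      Matrix.diagonal ![q ^ (-2 : ℤ) * (q ^ 2 - 1) * (q ^ 6 - 1),
        q ^ (-4 : ℤ) * (q ^ 2 - 1) * (q ^ 6 - 1),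
        q ^ (-8 : ℤ) * (q ^ 2 - 1) * (q ^ 6 - 1),
        q ^ (-8 : ℤ) * (q ^ 6 - 1), q ^ (-18 : ℤ) * (q ^ 6 - 1), q ^ (-18 : ℤ)]
    let Pt : Matrix (Fin 6) (Fin 6) (K) :=
      !![1, 0, q ^ 2, q ^ 2, q ^ 6, q ^ 6;
         0, 1, 0, q ^ 2, 0, q ^ 8;
         0, 0, 1, 1, q ^ 4, q ^ 4 + q ^ 8;
         0, 0, 0, 1, q ^ 4, q ^ 4 + q ^ 6;
         0, 0, 0, 0, 1, 1;
         0, 0, 0, 0, 0, 1]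
    M = Pt * A * Pt.transpose := by
  have hz : ζ ^ 2 - ζ + 1 = 0 := by
    have := hζ.isRoot_cyclotomic (by norm_num)
    simpa [Polynomial.cyclotomic_six, Polynomial.IsRoot] using this
  have hz0 : ζ ≠ 0 := hζ.ne_zero (by norm_num)
  have hi : ζ⁻¹ = 1 - ζ := by
    field_simp
    linear_combination hz
  have hz2 : ζ ^ 2 = ζ - 1 := by linear_combination hz
  have hi2 : (1 - ζ) ^ 2 = -ζ := by linear_combination hz
  have hz3 : ζ ^ 3 = -1 := by linear_combination (ζ + 1) * hz
  have hi3 : (1 - ζ) ^ 3 = -1 := by linear_combination (2 - ζ) * hz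
  have hz4 : ζ ^ 4 = -ζ := by linear_combination ζ * hz3
  have hi4 : (1 - ζ) ^ 4 = ζ - 1 := by linear_combination (1 - ζ) * hi3
  have hz5 : ζ ^ 5 = 1 - ζ := by linear_combination ζ ^ 2 * hz3 - hz
  have hi5 : (1 - ζ) ^ 5 = ζ := by linear_combination (1 - ζ) ^ 2 * hi3 - hz
  have v0 : ZMod.val (0 : ZMod 6) = 0 := rfl
  have v1 : ZMod.val (1 : ZMod 6) = 1 := rfl
  have v2 : ZMod.val (2 : ZMod 6) = 2 := rfl
  have v3 : ZMod.val (3 : ZMod 6) = 3 := rfl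
  have v4 : ZMod.val (4 : ZMod 6) = 4 := rfl
  have v5 : ZMod.val (5 : ZMod 6) = 5 := rfl
  have r0 : χρ (DihedralGroup.r 0) = 2 := by rw [hχρ_r, v0]; norm_num
  have r1 : χρ (DihedralGroup.r 1) = 1 := by rw [hχρ_r, v1, hi]; ring
  have r2 : χρ (DihedralGroup.r 2) = -1 := by rw [hχρ_r, v2, hi, hz2, hi2]; ring
  have r3 : χρ (DihedralGroup.r 3) = -2 := by rw [hχρ_r, v3, hi, hz3, hi3]; ring
  have r4 : χρ (DihedralGroup.r 4) = -1 := by rw [hχρ_r, v4, hi, hz4, hi4]; ring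
  have r5 : χρ (DihedralGroup.r 5) = 1 := by rw [hχρ_r, v5, hi, hz5, hi5]; ring
  have p0 : χρ' (DihedralGroup.r 0) = 2 := by rw [hχρ'_r, v0]; norm_num
  have p1 : χρ' (DihedralGroup.r 1) = -1 := by rw [hχρ'_r, v1, hi, hz2, hi2]; ring
  have p2 : χρ' (DihedralGroup.r 2) = -1 := by
    rw [hχρ'_r, v2, hi, hz2, hi2]; linear_combination 2 * hz
  have p3 : χρ' (DihedralGroup.r 3) = 2 := by
    rw [hχρ'_r, v3, hi, ← pow_mul, ← pow_mul, mul_comm, pow_mul, pow_mul, hz3, hi3]; norm_num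
  have p4 : χρ' (DihedralGroup.r 4) = -1 := by
    rw [hχρ'_r, v4, hi, ← pow_mul, ← pow_mul, mul_comm, pow_mul, pow_mul, hz4, hi4]
    linear_combination 2 * hz
  have p5 : χρ' (DihedralGroup.r 5) = -1 := by
    rw [hχρ'_r, v5, hi, ← pow_mul, ← pow_mul, mul_comm, pow_mul, pow_mul, hz5, hi5]
    linear_combination 2 * hz
  have c2 : (C (2 : ℂ)) = 2 := map_ofNat _ 2
  have c12 : (C (1 / 12 : ℂ)) = 1 / 12 := by
    rw [map_div₀, map_one]; congr 1; exact map_ofNat _ 12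
  have G : ∀ χ : DihedralGroup 6 → ℂ, Γ χ = _ := fun χ => by
    have key := gamma_field (X : K) d1 d2 d3 d4 (1 / 12)
      (C (χ (DihedralGroup.r 0))) (C (χ (DihedralGroup.r 1)))
      (C (χ (DihedralGroup.r 2))) (C (χ (DihedralGroup.r 3)))
      (C (χ (DihedralGroup.r 4))) (C (χ (DihedralGroup.r 5)))
      (C (χ (DihedralGroup.sr 0))) (C (χ (DihedralGroup.sr 1)))
      (C (χ (DihedralGroup.sr 2))) (C (χ (DihedralGroup.sr 3)))
      (C (χ (DihedralGroup.sr 4))) (C (χ (DihedralGroup.sr 5)))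
    refine Eq.trans ?_ key
    rw [hΓ, sum_dihedral_six, c12, r0, r1, r2, r3, r4, r5]
    simp only [hχρ_sr, hχs_r, hχs_sr, map_neg, map_one, map_zero, c2]
  have hC : ∀ n : ℤ, C (n : ℂ) = (n : K) := fun n => map_intCast _ n
  intro q h E M A Pt
  have hq : q ≠ 0 := d0
  ext i j
  rw [Matrix.mul_apply]
  simp only [A, Matrix.mul_diagonal, Matrix.transpose_apply, Fin.sum_univ_six]
  simp only [M, Matrix.of_apply, G]
  have hqX : (X : K) = q := rfl
  rw [hqX]
  clear_value q
  fin_cases i <;> fin_cases j <;>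
  · simp only [h, E, Pt, Matrix.of_apply, Matrix.cons_val, Fin.zero_eta, Fin.mk_one, Fin.reduceFinMk,
      Fin.isValue, hχ1, hχs_r, hχs_sr, hχε_r, hχε_sr, hχε'_r, hχε'_sr, hχρ_sr, hχρ'_sr,
      r0, r1, r2, r3, r4, r5, p0, p1, p2, p3, p4, p5, v0, v1, v2, v3, v4, v5,
      map_mul, map_neg, map_one, map_zero, map_pow, c2]
    norm_num [zpow_neg]
    try field_simp
    try ring

/-- The factorization `M = ᵗΠ · A · Π` of the 6×6 matrix
`M_{h,h'} = q^{-h-h'} Γ_{E_h ⊗ E_{h'}}` over `ℚ(q)` (here `ℂ(q)`), where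
`H = (0,1,3,4,9,12)`, `E_0 = 1, E_1 = ε, E_3 = ρ, E_4 = ρ', E_9 = ε', E_12 = s` are the
irreducible representations of the dihedral group `W` of order 12 and
`Γ_E = (1/12) Σ_{w∈W} (q²-1)(q⁶-1) tr(w,E)/det(q·Id - w)` (so that
`Γ_{E⊗E'}` is computed from the product character `χ_E χ_{E'}`).  `A` is the stated
diagonal matrix and `ᵗΠ` the stated upper triangular matrix with 1's on the diagonal. -/
theorem stmt11 (ζ : ℂ) (hζ : IsPrimitiveRoot ζ 6)
    (χ1 χs χε χε' χρ χρ' : DihedralGroup 6 → ℂ)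
    (hχ1 : ∀ g, χ1 g = 1)
    (hχs_r : ∀ j : ZMod 6, χs (DihedralGroup.r j) = 1)
    (hχs_sr : ∀ j : ZMod 6, χs (DihedralGroup.sr j) = -1)
    (hχε_r : ∀ j : ZMod 6, χε (DihedralGroup.r j) = (-1) ^ j.val)
    (hχε_sr : ∀ j : ZMod 6, χε (DihedralGroup.sr j) = (-1) ^ (j.val + 1))
    (hχε'_r : ∀ j : ZMod 6, χε' (DihedralGroup.r j) = (-1) ^ j.val)
    (hχε'_sr : ∀ j : ZMod 6, χε' (DihedralGroup.sr j) = (-1) ^ j.val)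
    (hχρ_r : ∀ j : ZMod 6, χρ (DihedralGroup.r j) = ζ ^ j.val + ζ⁻¹ ^ j.val)
    (hχρ_sr : ∀ j : ZMod 6, χρ (DihedralGroup.sr j) = 0)
    (hχρ'_r : ∀ j : ZMod 6, χρ' (DihedralGroup.r j) = (ζ ^ 2) ^ j.val + (ζ⁻¹ ^ 2) ^ j.val)
    (hχρ'_sr : ∀ j : ZMod 6, χρ' (DihedralGroup.sr j) = 0)
    (Γ : (DihedralGroup 6 → ℂ) → RatFunc ℂ)
    (hΓ : ∀ χE : DihedralGroup 6 → ℂ,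
      Γ χE = RatFunc.C (1 / 12 : ℂ) * ∑ w : DihedralGroup 6,
        (RatFunc.X ^ 2 - 1) * (RatFunc.X ^ 6 - 1) * RatFunc.C (χE w) /
          (RatFunc.X ^ 2 - RatFunc.C (χρ w) * RatFunc.X + RatFunc.C (χs w))) :
    let q : RatFunc ℂ := RatFunc.X
    let h : Fin 6 → ℤ := ![0, 1, 3, 4, 9, 12]
    let E : Fin 6 → (DihedralGroup 6 → ℂ) := ![χ1, χε, χρ, χρ', χε', χs]
    let M : Matrix (Fin 6) (Fin 6) (RatFunc ℂ) :=
      Matrix.of fun i j => q ^ (-(h i + h j)) * Γ (fun w => E i w * E j w)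
    let A : Matrix (Fin 6) (Fin 6) (RatFunc ℂ) :=
      Matrix.diagonal ![q ^ (-2 : ℤ) * (q ^ 2 - 1) * (q ^ 6 - 1),
        q ^ (-4 : ℤ) * (q ^ 2 - 1) * (q ^ 6 - 1),
        q ^ (-8 : ℤ) * (q ^ 2 - 1) * (q ^ 6 - 1),
        q ^ (-8 : ℤ) * (q ^ 6 - 1), q ^ (-18 : ℤ) * (q ^ 6 - 1), q ^ (-18 : ℤ)]
    let Pt : Matrix (Fin 6) (Fin 6) (RatFunc ℂ) :=
      !![1, 0, q ^ 2, q ^ 2, q ^ 6, q ^ 6;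
         0, 1, 0, q ^ 2, 0, q ^ 8;
         0, 0, 1, 1, q ^ 4, q ^ 4 + q ^ 8;
         0, 0, 0, 1, q ^ 4, q ^ 4 + q ^ 6;
         0, 0, 0, 0, 1, 1;
         0, 0, 0, 0, 0, 1]
    M = Pt * A * Pt.transpose := by
  have d0 : (RatFunc.X : RatFunc ℂ) ≠ 0 := RatFunc.X_ne_zero
  have hd := denominators_ne (algebraMap (Polynomial ℂ) (RatFunc ℂ))
    (RatFunc.algebraMap_injective ℂ)
  rw [RatFunc.algebraMap_X] at hd
  obtain ⟨d1, d2, d3, d4⟩ := hd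
  have : CharZero (RatFunc ℂ) := algebraRat.charZero _
  exact main_field RatFunc.C RatFunc.X d0 d1 d2 d3 d4 ζ hζ χ1 χs χε χε' χρ χρ' hχ1 hχs_r hχs_sr
    hχε_r hχε_sr hχε'_r hχε'_sr hχρ_r hχρ_sr hχρ'_r hχρ'_sr Γ hΓ
end
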